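/- Let E be a field with a ring involution, let J₁, J₂ be invertible Hermitian d×d matrices over E, and for X ∈ Mat_d(E) write X^⋆ = J₂⁻¹·Xᴴ·J₁. Suppose X, X' ∈ Mat_d(E) with X invertible and X·X^⋆ = X'·X'^⋆. Then X' is invertible, and there exists a unique matrix h ∈ Mat_d(E) satisfying hᴴ·J₂·h = J₂ (i.e. h ∈ U(J₂)) and X' = X·h. In other words, the unitary group U(J₂) acts simply transitively on the set of invertible matrices with a fixed value of the contraction map r(X) = X·X^⋆. -/

import Mathlib

/-! Writing `X' = X h` with `X` invertible, the equation `X X^⋆ = X' X'^⋆` cancels to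
`h J₂⁻¹ hᴴ = J₂⁻¹`, so `J₂⁻¹ hᴴ J₂` is a right inverse of `h`. Being square, it is also a left
inverse, which says both that `h` is invertible and that `hᴴ J₂ h = J₂`. Uniqueness of `h` is
left cancellation of `X`. -/

open Matrix

/-- Over the non-singular locus, the unitary group `U(J₂)` acts simply
transitively on the fibers of the contraction map `r(X) = X X^⋆`,
where `X^⋆ = J₂⁻¹ Xᴴ J₁`. -/
theorem stmt_8 {E : Type*} [Field E] [StarRing E] {d : ℕ}
    (J₁ J₂ : Matrix (Fin d) (Fin d) E)
    (hJ₁ : IsUnit J₁) (hJ₂ : IsUnit J₂)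
    (hJ₁h : J₁ᴴ = J₁) (hJ₂h : J₂ᴴ = J₂)
    (X X' : Matrix (Fin d) (Fin d) E) (hX : IsUnit X)
    (hr : X * (J₂⁻¹ * Xᴴ * J₁) = X' * (J₂⁻¹ * X'ᴴ * J₁)) :
    IsUnit X' ∧
      ∃! h : Matrix (Fin d) (Fin d) E, hᴴ * J₂ * h = J₂ ∧ X' = X * h := by
  have hJ₂d : IsUnit J₂.det := (isUnit_iff_isUnit_det J₂).1 hJ₂
  have hXd : IsUnit X.det := (isUnit_iff_isUnit_det X).1 hX
  -- The only possible witness is `h = X⁻¹ X'`.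
  obtain ⟨h, rfl⟩ : ∃ h, X' = X * h :=
    ⟨X⁻¹ * X', (mul_nonsing_inv_cancel_left X X' hXd).symm⟩
  -- Cancelling `X` on the left and `Xᴴ J₁` on the right of the fiber equation.
  have hc : J₂⁻¹ = h * J₂⁻¹ * hᴴ := by
    have hXs : IsUnit Xᴴ := hX.star
    apply hX.mul_left_cancel
    apply (hXs.mul hJ₁).mul_right_cancel
    simpa only [conjTranspose_mul, Matrix.mul_assoc] using hr
  have hright : h * (J₂⁻¹ * hᴴ * J₂) = 1 := by
    rw [← Matrix.mul_assoc, ← Matrix.mul_assoc, ← hc, nonsing_inv_mul J₂ hJ₂d]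
  -- A right inverse of a square matrix is also a left inverse, which turns
  -- `h J₂⁻¹ hᴴ = J₂⁻¹` into the unitarity relation `hᴴ J₂ h = J₂`.
  have hleft : J₂⁻¹ * hᴴ * J₂ * h = 1 := mul_eq_one_comm.1 hright
  have hu : IsUnit h := ⟨⟨h, _, hright, hleft⟩, rfl⟩
  refine ⟨hX.mul hu, h, ⟨?_, rfl⟩, fun k hk => (hX.mul_left_cancel hk.2).symm⟩
  calc hᴴ * J₂ * h = J₂ * (J₂⁻¹ * (hᴴ * J₂ * h)) :=
        (mul_nonsing_inv_cancel_left J₂ _ hJ₂d).symm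
    _ = J₂ * (J₂⁻¹ * hᴴ * J₂ * h) := by simp only [Matrix.mul_assoc]
    _ = J₂ := by rw [hleft, Matrix.mul_one]
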